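/- (Theorem 1.) Let λ > 0, X ∈ ℝ^{p×n} be a data matrix, Y ∈ ℝ^{k×n} a label matrix, E ∈ ℝ^{q×n} a task-embedding matrix, and X̂ = (Xᵀ, Eᵀ)ᵀ ∈ ℝ^{(p+q)×n} the augmented data matrix. Let Ŵ₁ = (XXᵀ + λI)⁻¹XYᵀ be the minimizer of ‖Y − WᵀX‖_F² + λ‖W‖_F² and Ŵ₂ = (X̂X̂ᵀ + λI)⁻¹X̂Yᵀ the minimizer of ‖Y − WᵀX̂‖_F² + λ‖W‖_F². If XᵀXEᵀE + EᵀEXᵀX + 2λEᵀE + EᵀEEᵀE is positive semidefinite, then ‖Y − Ŵ₁ᵀX‖_F² ≥ ‖Y − Ŵ₂ᵀX̂‖_F². -/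

import Mathlib

/-!
By the push-through identity `(XXᵀ + λ)⁻¹X = X(XᵀX + λ)⁻¹`, the residual of a ridge regression is
`λ Y (XᵀX + λ)⁻¹`. With `A = XᵀX + λ` and `B = X̂ᵀX̂ + λ = A + EᵀE`, the two training losses are
`λ² tr(Y A⁻² Yᵀ)` and `λ² tr(Y B⁻² Yᵀ)`, while the hypothesis says exactly that `B² - A²` is positive
semidefinite. The claim follows since inversion is order-reversing on positive definite matrices
(`posSemidef_inv_sq_sub`).
-/

open Matrix

lemma ridge_gram_posDef {m n : Type*} [Fintype m] [Fintype n] [DecidableEq n]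
    {lam : ℝ} (hlam : 0 < lam) (X : Matrix m n ℝ) :
    (Xᵀ * X + lam • (1 : Matrix n n ℝ)).PosDef := by
  have h1 : (Xᵀ * X).PosSemidef := by
    simpa [conjTranspose_eq_transpose_of_trivial] using posSemidef_conjTranspose_mul_self X
  exact PosDef.posSemidef_add h1 (PosDef.one.smul hlam)

/-- The residual of ridge regression, via the push-through identity. -/
lemma ridge_residual {m n l : Type*} [Fintype m] [Fintype n] [DecidableEq m] [DecidableEq n]
    {lam : ℝ} (hlam : 0 < lam) (X : Matrix m n ℝ) (Y : Matrix l n ℝ) :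
    Y - ((X * Xᵀ + lam • (1 : Matrix m m ℝ))⁻¹ * X * Yᵀ)ᵀ * X
      = lam • (Y * (Xᵀ * X + lam • (1 : Matrix n n ℝ))⁻¹) := by
  have hA := (isUnit_iff_isUnit_det _).1 (ridge_gram_posDef hlam X).isUnit
  have hC := (isUnit_iff_isUnit_det _).1 (ridge_gram_posDef hlam Xᵀ).isUnit
  rw [transpose_transpose] at hC
  have hAt : (Xᵀ * X + lam • (1 : Matrix n n ℝ))ᵀ = Xᵀ * X + lam • (1 : Matrix n n ℝ) := by
    simp
  have hG : Xᵀ * X = (Xᵀ * X + lam • (1 : Matrix n n ℝ)) - lam • (1 : Matrix n n ℝ) := by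
    simp
  have hcomm : (X * Xᵀ + lam • (1 : Matrix m m ℝ)) * X
      = X * (Xᵀ * X + lam • (1 : Matrix n n ℝ)) := by
    simp [Matrix.add_mul, Matrix.mul_add, Matrix.mul_assoc]
  have hpush : (X * Xᵀ + lam • (1 : Matrix m m ℝ))⁻¹ * X
      = X * (Xᵀ * X + lam • (1 : Matrix n n ℝ))⁻¹ := by
    calc _ = (X * Xᵀ + lam • (1 : Matrix m m ℝ))⁻¹
          * (X * (Xᵀ * X + lam • (1 : Matrix n n ℝ)))
            * (Xᵀ * X + lam • (1 : Matrix n n ℝ))⁻¹ := by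
          rw [Matrix.mul_assoc, mul_nonsing_inv_cancel_right _ _ hA]
      _ = _ := by rw [← hcomm, nonsing_inv_mul_cancel_left _ _ hC]
  rw [hpush, transpose_mul, transpose_mul, transpose_transpose, transpose_nonsing_inv, hAt,
    Matrix.mul_assoc, Matrix.mul_assoc]
  generalize hAd : Xᵀ * X + lam • (1 : Matrix n n ℝ) = A at *
  rw [hG, Matrix.mul_sub, nonsing_inv_mul _ hA]
  simp [Matrix.mul_sub]

/-- Inversion reverses the order of `A²` and `B²`. With `D = B² - A²`, the difference
`A⁻² - B⁻²` equals `B⁻² (D + D A⁻² D) B⁻²`, which is visibly positive semidefinite. -/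
lemma posSemidef_inv_sq_sub {n : Type*} [Fintype n] [DecidableEq n] {A B : Matrix n n ℝ}
    (hA : A.PosDef) (hB : B.PosDef) (h : (B * B - A * A).PosSemidef) :
    (A⁻¹ * A⁻¹ - B⁻¹ * B⁻¹).PosSemidef := by
  have hAu := (isUnit_iff_isUnit_det _).1 hA.isUnit
  have hBu := (isUnit_iff_isUnit_det _).1 hB.isUnit
  have hAi : (A⁻¹)ᴴ = A⁻¹ := hA.inv.isHermitian
  have hBi : (B⁻¹)ᴴ = B⁻¹ := hB.inv.isHermitian
  have hDi : (B * B - A * A)ᴴ = B * B - A * A := h.isHermitian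
  have h1 := h.conjTranspose_mul_mul_same (B⁻¹ * B⁻¹)
  have h2 := posSemidef_conjTranspose_mul_self (A⁻¹ * (B * B - A * A) * (B⁻¹ * B⁻¹))
  have h3 := h1.add h2
  simp only [conjTranspose_mul, hAi, hBi, hDi] at h3
  convert h3 using 1
  have eP : (A⁻¹ * A⁻¹) * (A * A) = 1 := by
    rw [Matrix.mul_assoc, nonsing_inv_mul_cancel_left _ _ hAu, nonsing_inv_mul _ hAu]
  have eQ : (B⁻¹ * B⁻¹) * (B * B) = 1 := by
    rw [Matrix.mul_assoc, nonsing_inv_mul_cancel_left _ _ hBu, nonsing_inv_mul _ hBu]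
  have eP' : (A * A) * (A⁻¹ * A⁻¹) = 1 := mul_eq_one_comm.1 eP
  have eQ' : (B * B) * (B⁻¹ * B⁻¹) = 1 := mul_eq_one_comm.1 eQ
  have reassoc : B⁻¹ * B⁻¹ * ((B * B - A * A) * A⁻¹) * (A⁻¹ * (B * B - A * A) * (B⁻¹ * B⁻¹))
      = B⁻¹ * B⁻¹ * (B * B - A * A) * (A⁻¹ * A⁻¹) * (B * B - A * A) * (B⁻¹ * B⁻¹) := by
    simp only [Matrix.mul_assoc]
  rw [reassoc]
  generalize A⁻¹ * A⁻¹ = P' at *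
  generalize B⁻¹ * B⁻¹ = Q' at *
  generalize A * A = P at *
  generalize B * B = Q at *
  have e1 : Q' * (Q - P) * P' = P' - Q' := by
    rw [Matrix.mul_sub, eQ, Matrix.sub_mul, Matrix.one_mul, Matrix.mul_assoc, eP', Matrix.mul_one]
  have e2 : Q' * (Q - P) = 1 - Q' * P := by rw [Matrix.mul_sub, eQ]
  have e3 : (Q - P) * Q' = 1 - P * Q' := by rw [Matrix.sub_mul, eQ']
  rw [e1, Matrix.mul_assoc (P' - Q'), e3, e2]
  have e4 : P' * (P * Q') = Q' := by rw [← Matrix.mul_assoc, eP, Matrix.one_mul]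
  simp only [Matrix.sub_mul, Matrix.mul_sub, Matrix.mul_one, Matrix.one_mul, e4, Matrix.mul_assoc]
  abel

/-- Theorem 1 of the paper: if `XᵀXEᵀE + EᵀEXᵀX + 2λEᵀE + EᵀEEᵀE` is positive
semidefinite, then the training loss (squared Frobenius norm of the residual,
written via traces) of the augmented ridge model `Ŵ₂ = (X̂X̂ᵀ + λI)⁻¹X̂Yᵀ` with
`X̂ = (Xᵀ, Eᵀ)ᵀ` is no larger than that of the plain ridge model
`Ŵ₁ = (XXᵀ + λI)⁻¹XYᵀ`. -/
theorem training_loss_comparison (p q n k : ℕ) (lam : ℝ) (hlam : 0 < lam)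
    (X : Matrix (Fin p) (Fin n) ℝ) (E : Matrix (Fin q) (Fin n) ℝ)
    (Y : Matrix (Fin k) (Fin n) ℝ)
    (hcond : (Xᵀ * X * (Eᵀ * E) + Eᵀ * E * (Xᵀ * X) + (2 * lam) • (Eᵀ * E)
        + Eᵀ * E * (Eᵀ * E)).PosSemidef) :
    trace ((Y - ((Matrix.fromRows X E * (Matrix.fromRows X E)ᵀ
            + lam • (1 : Matrix (Fin p ⊕ Fin q) (Fin p ⊕ Fin q) ℝ))⁻¹
            * Matrix.fromRows X E * Yᵀ)ᵀ * Matrix.fromRows X E) *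
          (Y - ((Matrix.fromRows X E * (Matrix.fromRows X E)ᵀ
            + lam • (1 : Matrix (Fin p ⊕ Fin q) (Fin p ⊕ Fin q) ℝ))⁻¹
            * Matrix.fromRows X E * Yᵀ)ᵀ * Matrix.fromRows X E)ᵀ)
      ≤ trace ((Y - ((X * Xᵀ + lam • (1 : Matrix (Fin p) (Fin p) ℝ))⁻¹ * X * Yᵀ)ᵀ * X) *
          (Y - ((X * Xᵀ + lam • (1 : Matrix (Fin p) (Fin p) ℝ))⁻¹ * X * Yᵀ)ᵀ * X)ᵀ) := by
  have hA := ridge_gram_posDef hlam X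
  have hB := ridge_gram_posDef hlam (fromRows X E)
  have hBA : (fromRows X E)ᵀ * fromRows X E + lam • (1 : Matrix (Fin n) (Fin n) ℝ)
      = (Xᵀ * X + lam • (1 : Matrix (Fin n) (Fin n) ℝ)) + Eᵀ * E := by
    rw [transpose_fromRows, fromCols_mul_fromRows]
    abel
  rw [ridge_residual hlam, ridge_residual hlam]
  rw [hBA] at hB ⊢
  have hD := posSemidef_inv_sq_sub hA hB (by
    convert hcond using 1
    simp only [Matrix.add_mul, Matrix.mul_add, Matrix.smul_mul, Matrix.mul_smul, Matrix.mul_one,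
      Matrix.one_mul, two_mul, add_smul, smul_add]
    abel)
  have hAi : ((Xᵀ * X + lam • (1 : Matrix (Fin n) (Fin n) ℝ))⁻¹)ᵀ = _ := hA.inv.isHermitian
  have hBi : ((Xᵀ * X + lam • (1 : Matrix (Fin n) (Fin n) ℝ) + Eᵀ * E)⁻¹)ᵀ = _ :=
    hB.inv.isHermitian
  have ht := (hD.mul_mul_conjTranspose_same Y).trace_nonneg
  rw [conjTranspose_eq_transpose_of_trivial, Matrix.mul_sub, Matrix.sub_mul, trace_sub] at ht
  simp only [transpose_smul, transpose_mul, hAi, hBi, Matrix.smul_mul, Matrix.mul_smul, trace_smul,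
    smul_eq_mul]
  simp only [Matrix.mul_assoc] at ht ⊢
  gcongr
  linarith
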